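/- Let A be a C*-algebra and let a, b be positive elements of A with ‖a‖ ≤ 1 and ‖b‖ ≤ 1. Suppose a ≼ (b - δ)₊ for some δ > 0 (Cuntz subequivalence). Then for every ε > 0 there exists x ∈ A with (a - ε)₊ = x b x* and ‖x‖² ≤ ‖a‖/δ. -/

import Mathlib

open Filter Topology

def CuntzBelow {A : Type*} [CStarAlgebra A] (a b : A) : Prop :=
  ∃ x : ℕ → A, Tendsto (fun n => ‖a - x n * b * star (x n)‖) atTop (𝓝 0)

noncomputable def cutoff {A : Type*} [CStarAlgebra A] (a : A) (δ : ℝ) : A :=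
  cfc (fun t : ℝ => max (t - δ) 0) a

section Auxiliary

variable {A : Type*} [CStarAlgebra A] [PartialOrder A] [StarOrderedRing A]

theorem norm_mul_sq_le_of_mul_star_le {f k : A} {C : ℝ} (hC : 0 ≤ C)
    (h : f * star f ≤ C • (k * star k)) (g : A) : ‖g * f‖ ^ 2 ≤ C * ‖g * k‖ ^ 2 := by
  have h1 : (g * f) * star (g * f) ≤ C • ((g * k) * star (g * k)) := by
    have := star_right_conjugate_le_conjugate h g
    simpa [mul_assoc] using this
  have h2 := CStarAlgebra.norm_le_norm_of_nonneg_of_le (mul_star_self_nonneg _) h1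
  rwa [norm_smul, CStarRing.norm_self_mul_star, CStarRing.norm_self_mul_star, ← sq, ← sq,
    Real.norm_of_nonneg hC] at h2

theorem exists_norm_one_sub_mul_mul_le {k : A} (hk : 0 ≤ k) {η : ℝ} (hη : 0 < η) :
    ∃ r : A, ‖(1 - k * r) * k‖ ≤ η := by
  have hne : ∀ t : ℝ, |t| + η ≠ 0 := fun t => by positivity
  have hc : Continuous fun t : ℝ => (|t| + η)⁻¹ := by fun_prop (disch := exact hne _)
  refine ⟨cfc (fun t : ℝ => (|t| + η)⁻¹) k, ?_⟩
  have hk' : IsSelfAdjoint k := .of_nonneg hk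
  have key : (1 - k * cfc (fun t : ℝ => (|t| + η)⁻¹) k) * k
      = cfc (fun t : ℝ => (1 - t * (|t| + η)⁻¹) * t) k := by
    rw [cfc_mul (fun t : ℝ => 1 - t * (|t| + η)⁻¹) (fun t : ℝ => t) k
        (continuous_const.sub (continuous_id.mul hc)).continuousOn continuousOn_id,
      cfc_sub (fun _ : ℝ => 1) (fun t : ℝ => t * (|t| + η)⁻¹) k continuousOn_const
        (continuous_id.mul hc).continuousOn,
      cfc_mul (fun t : ℝ => t) (fun t : ℝ => (|t| + η)⁻¹) k continuousOn_id hc.continuousOn, cfc_id' ℝ k, cfc_const_one ℝ k]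
  rw [key]
  refine norm_cfc_le hη.le fun t ht => ?_
  have ht0 : 0 ≤ t := spectrum_nonneg_of_nonneg hk ht
  have hpos : 0 < t + η := by positivity
  have he : (1 - t * (|t| + η)⁻¹) * t = η * t / (t + η) := by
    rw [abs_of_nonneg ht0]; field_simp; ring
  rw [he, Real.norm_of_nonneg (by positivity), div_le_iff₀ hpos]
  nlinarith

/-- If `f f* ≤ C w* w`, then the polar part of `w` can be applied to `f` inside the algebra. -/
theorem exists_mem_closure_star_mul_self_eq {f w : A} {C : ℝ} (hC : 0 ≤ C)
    (h : f * star f ≤ C • (star w * w)) :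
    ∃ y ∈ closure (Set.range fun z => w * z), star y * y = star f * f := by
  have hk : 0 ≤ CFC.abs w := CFC.abs_nonneg w
  have hks : star (CFC.abs w) = CFC.abs w := (IsSelfAdjoint.of_nonneg hk).star_eq
  have hkk : star (CFC.abs w) * CFC.abs w = star w * w := by rw [hks, CFC.abs_mul_abs]
  have hsq (z : A) : star (w * z) * (w * z) = star (CFC.abs w * z) * (CFC.abs w * z) := by
    calc star (w * z) * (w * z) = star z * (star w * w) * z := by simp [mul_assoc]
      _ = _ := by rw [← hkk]; simp [mul_assoc]
  have hnorm (z : A) : ‖w * z‖ = ‖CFC.abs w * z‖ := by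
    rw [← sq_eq_sq₀ (norm_nonneg _) (norm_nonneg _), sq, sq, ← CStarRing.norm_star_mul_self,
      ← CStarRing.norm_star_mul_self, hsq]
  have hf : f * star f ≤ C • (CFC.abs w * star (CFC.abs w)) := by
    rwa [hks, CFC.abs_mul_abs]
  choose r hr using fun n : ℕ =>
    exists_norm_one_sub_mul_mul_le hk (Nat.one_div_pos_of_nat (α := ℝ) (n := n))
  have hlim0 : Tendsto (fun n : ℕ => 1 / ((n : ℝ) + 1)) atTop (𝓝 0) :=
    tendsto_one_div_add_atTop_nhds_zero_nat
  have hlim : Tendsto (fun n => CFC.abs w * (r n * f)) atTop (𝓝 f) := by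
    rw [tendsto_iff_norm_sub_tendsto_zero]
    have hb : Tendsto (fun n : ℕ => √C * (1 / ((n : ℝ) + 1))) atTop (𝓝 0) := by
      simpa using hlim0.const_mul (√C)
    refine squeeze_zero (fun _ => norm_nonneg _) (fun n => ?_) hb
    have h1 := norm_mul_sq_le_of_mul_star_le hC hf (1 - CFC.abs w * r n)
    have h2 : ‖CFC.abs w * (r n * f) - f‖ = ‖(1 - CFC.abs w * r n) * f‖ := by
      rw [norm_sub_rev, sub_mul, one_mul, mul_assoc]
    rw [h2]
    refine le_of_sq_le_sq ?_ (by positivity)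
    rw [mul_pow, Real.sq_sqrt hC]
    refine h1.trans ?_
    gcongr
    exact hr n
  have hcau : CauchySeq fun n => w * (r n * f) := by
    have := hlim.cauchySeq
    rw [Metric.cauchySeq_iff] at this ⊢
    intro ε hε
    obtain ⟨N, hN⟩ := this ε hε
    refine ⟨N, fun m hm n hn => ?_⟩
    have := hN m hm n hn
    rw [dist_eq_norm, ← mul_sub] at this ⊢
    rwa [hnorm]
  obtain ⟨y, hy⟩ := cauchySeq_tendsto_of_complete hcau
  refine ⟨y, mem_closure_of_tendsto hy (.of_forall fun n => ⟨_, rfl⟩), ?_⟩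
  refine tendsto_nhds_unique (hy.star.mul hy) ?_
  simp_rw [hsq]
  exact hlim.star.mul hlim

theorem cutoff_nonneg (a : A) (ε : ℝ) : 0 ≤ cutoff a ε :=
  cfc_nonneg fun _ _ => le_max_right _ _

theorem norm_cutoff_le {a : A} (ha : 0 ≤ a) {ε : ℝ} (hε : 0 ≤ ε) : ‖cutoff a ε‖ ≤ ‖a‖ := by
  obtain (_ | _) := subsingleton_or_nontrivial A
  · rw [Subsingleton.elim (cutoff a ε) a]
  refine norm_cfc_le (norm_nonneg _) fun t ht => ?_
  have ht0 : 0 ≤ t := spectrum_nonneg_of_nonneg ha ht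
  have := spectrum.norm_le_norm_of_mem ht
  rw [Real.norm_of_nonneg ht0] at this
  rw [Real.norm_of_nonneg (le_max_right _ _)]
  exact max_le (by linarith) (norm_nonneg _)

theorem exists_cutoff_eq_mul_mul_star {a d : A} (ha : 0 ≤ a) (hd : 0 ≤ d) {ε : ℝ}
    (h : ‖a - d‖ < ε) : ∃ z : A, cutoff a ε = z * d * star z := by
  have ha' : IsSelfAdjoint a := .of_nonneg ha
  have hd' : IsSelfAdjoint d := .of_nonneg hd
  have hε : 0 < ε := (norm_nonneg _).trans_lt h
  set η := (ε - ‖a - d‖) / 2 with hη_def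
  have hη : 0 < η := by simp only [hη_def]; linarith
  set m : A := cfc (fun t : ℝ => √(max (t - η) 0)) d
  set p : A := cfc (fun t : ℝ => (√(max t η))⁻¹) d
  have hne : ∀ t : ℝ, √(max t η) ≠ 0 := fun t => by positivity
  have hcp : Continuous fun t : ℝ => (√(max t η))⁻¹ := by fun_prop (disch := exact hne _)
  have hm : star m = m := (cfc_predicate (R := ℝ) (p := IsSelfAdjoint) _ d).star_eq
  have hp : star p = p := (cfc_predicate (R := ℝ) (p := IsSelfAdjoint) _ d).star_eq
  have hpm : p * d * p * m = m := by
    have : p * d * p * m = cfc (fun t : ℝ => (√(max t η))⁻¹ * t * (√(max t η))⁻¹ *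
        √(max (t - η) 0)) d := by
      rw [cfc_mul (fun t : ℝ => (√(max t η))⁻¹ * t * (√(max t η))⁻¹)
          (fun t : ℝ => √(max (t - η) 0)) d
          ((hcp.mul continuous_id).mul hcp).continuousOn (by fun_prop),
        cfc_mul (fun t : ℝ => (√(max t η))⁻¹ * t) (fun t : ℝ => (√(max t η))⁻¹) d
          (hcp.mul continuous_id).continuousOn hcp.continuousOn,
        cfc_mul (fun t : ℝ => (√(max t η))⁻¹) (fun t : ℝ => t) d hcp.continuousOn
          continuousOn_id, cfc_id' ℝ d]
    rw [this]
    refine cfc_congr fun t _ => ?_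
    rcases le_total t η with ht | ht
    · rw [max_eq_right (by linarith : t - η ≤ 0)]; simp
    · have ht0 : 0 < t := hη.trans_le ht
      have hs : √t ≠ 0 := by positivity
      rw [max_eq_left ht]
      have : (√t)⁻¹ * t * (√t)⁻¹ = 1 := by
        field_simp
        rw [Real.sq_sqrt ht0.le]
      rw [this, one_mul]
  have hmm : d - algebraMap ℝ A η ≤ m * m := by
    have h1 : d - algebraMap ℝ A η = cfc (fun t : ℝ => t - η) d := by
      rw [cfc_sub (fun t : ℝ => t) (fun _ => η) d, cfc_id' ℝ d, cfc_const η d]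
    rw [h1, ← cfc_mul (fun t : ℝ => √(max (t - η) 0)) (fun t : ℝ => √(max (t - η) 0)) d]
    refine cfc_mono fun t _ => ?_
    rw [Real.mul_self_sqrt (le_max_right _ _)]
    exact le_max_left _ _
  have had : a - algebraMap ℝ A (‖a - d‖ + η) ≤ m * m := by
    have := IsSelfAdjoint.le_algebraMap_norm_self (ha'.sub hd')
    refine le_trans ?_ hmm
    rw [map_add, ← sub_sub]
    gcongr
    rw [sub_le_iff_le_add, add_comm]
    rwa [sub_le_iff_le_add] at this
  set f : A := cfc (fun t : ℝ => √(max (t - ε) 0)) a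
  have hf : star f = f := (cfc_predicate (R := ℝ) (p := IsSelfAdjoint) _ a).star_eq
  have hff : f * f = cutoff a ε := by
    rw [← cfc_mul (fun t : ℝ => √(max (t - ε) 0)) (fun t : ℝ => √(max (t - ε) 0)) a]
    exact cfc_congr fun t _ => Real.mul_self_sqrt (le_max_right _ _)
  have hlow : η • (f * f) ≤ f * (a - algebraMap ℝ A (‖a - d‖ + η)) * f := by
    have h1 : f * (a - algebraMap ℝ A (‖a - d‖ + η)) * f = cfc (fun t : ℝ =>
        √(max (t - ε) 0) * (t - (‖a - d‖ + η)) * √(max (t - ε) 0)) a := by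
      rw [cfc_mul (fun t : ℝ => √(max (t - ε) 0) * (t - (‖a - d‖ + η)))
          (fun t : ℝ => √(max (t - ε) 0)) a,
        cfc_mul (fun t : ℝ => √(max (t - ε) 0)) (fun t : ℝ => t - (‖a - d‖ + η)) a,
        cfc_sub (fun t : ℝ => t) (fun _ => ‖a - d‖ + η) a, cfc_id' ℝ a,
        cfc_const (‖a - d‖ + η) a]
    rw [h1, hff, cutoff, ← cfc_smul η (fun t : ℝ => max (t - ε) 0) a]
    refine cfc_mono fun t _ => ?_
    rw [mul_right_comm, Real.mul_self_sqrt (le_max_right _ _), smul_eq_mul, mul_comm]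
    rcases le_total (t - ε) 0 with ht | ht
    · rw [max_eq_right ht]; simp
    · refine mul_le_mul_of_nonneg_left ?_ (le_max_right _ _)
      linarith
  have hfw : f * star f ≤ η⁻¹ • (star (m * f) * (m * f)) := by
    have h1 : η • (f * f) ≤ star (m * f) * (m * f) := by
      refine hlow.trans ?_
      have := star_left_conjugate_le_conjugate had f
      simpa [hf, hm, mul_assoc] using this
    have h2 := smul_le_smul_of_nonneg_left h1 (inv_nonneg.2 hη.le)
    rw [smul_smul, inv_mul_cancel₀ hη.ne', one_smul] at h2
    rwa [hf]
  obtain ⟨y, hy, hyy⟩ := exists_mem_closure_star_mul_self_eq (inv_nonneg.2 hη.le) hfw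
  have hpy : p * d * p * y = y := by
    have hcl : IsClosed {y : A | p * d * p * y = y} := isClosed_eq (by fun_prop) (by fun_prop)
    refine closure_minimal ?_ hcl hy
    rintro _ ⟨z, rfl⟩
    change p * d * p * (m * f * z) = m * f * z
    rw [← mul_assoc, ← mul_assoc, hpm]
  refine ⟨star (p * y), ?_⟩
  calc cutoff a ε = star y * y := by rw [hyy, hf, hff]
    _ = star y * (p * d * p * y) := by rw [hpy]
    _ = _ := by simp [hp, mul_assoc]

/-- Exact form of Cuntz subequivalence after cutting down, due to Rørdam. -/
theorem CuntzBelow.exists_cutoff_eq {a c : A} (ha : 0 ≤ a) (hc : 0 ≤ c) (h : CuntzBelow a c)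
    {ε : ℝ} (hε : 0 < ε) : ∃ s : A, cutoff a ε = s * c * star s := by
  obtain ⟨x, hx⟩ := h
  obtain ⟨n, hn⟩ := (hx.eventually_lt_const hε).exists
  obtain ⟨z, hz⟩ := exists_cutoff_eq_mul_mul_star ha (star_right_conjugate_nonneg hc (x n)) hn
  exact ⟨z * x n, by rw [hz]; simp [mul_assoc]⟩

end Auxiliary

theorem stmt_4 {A : Type*} [CStarAlgebra A] [PartialOrder A] [StarOrderedRing A] (a b : A) (ha : 0 ≤ a) (hb : 0 ≤ b)
    (ha₁ : ‖a‖ ≤ 1) (hb₁ : ‖b‖ ≤ 1) (δ : ℝ) (hδ : 0 < δ)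
    (h : CuntzBelow a (cutoff b δ)) (ε : ℝ) (hε : 0 < ε) :
    ∃ x : A, cutoff a ε = x * b * star x ∧ ‖x‖ ^ 2 ≤ ‖a‖ / δ := by
  obtain ⟨s, hs⟩ := h.exists_cutoff_eq ha (cutoff_nonneg b δ) hε
  have hb' : IsSelfAdjoint b := .of_nonneg hb
  have hne : ∀ t : ℝ, max t δ ≠ 0 := fun t => by positivity
  have hcg : Continuous fun t : ℝ => √(max (t - δ) 0 / max t δ) := by
    fun_prop (disch := exact hne _)
  set g : A := cfc (fun t : ℝ => √(max (t - δ) 0 / max t δ)) b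
  have hg : star g = g := (cfc_predicate (R := ℝ) (p := IsSelfAdjoint) _ b).star_eq
  have hsq (t : ℝ) : √(max (t - δ) 0 / max t δ) * √(max (t - δ) 0 / max t δ)
      = max (t - δ) 0 / max t δ := Real.mul_self_sqrt (by positivity)
  have hgbg : g * b * g = cutoff b δ := by
    have h1 : g * b * g = cfc (fun t : ℝ => √(max (t - δ) 0 / max t δ) * t *
        √(max (t - δ) 0 / max t δ)) b := by
      rw [cfc_mul (fun t : ℝ => √(max (t - δ) 0 / max t δ) * t)
          (fun t : ℝ => √(max (t - δ) 0 / max t δ)) b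
          (hcg.mul continuous_id).continuousOn hcg.continuousOn,
        cfc_mul (fun t : ℝ => √(max (t - δ) 0 / max t δ)) (fun t : ℝ => t) b
          hcg.continuousOn continuousOn_id, cfc_id' ℝ b]
    rw [h1]
    refine cfc_congr fun t _ => ?_
    rw [mul_right_comm, hsq]
    rcases le_total t δ with ht | ht
    · rw [max_eq_right (by linarith : t - δ ≤ 0)]; simp
    · rw [max_eq_left ht, div_mul_cancel₀ _ (hδ.trans_le ht).ne']
  have hgg : g * g ≤ δ⁻¹ • cutoff b δ := by
    rw [cutoff, ← cfc_smul δ⁻¹ (fun t : ℝ => max (t - δ) 0) b,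
      ← cfc_mul (fun t : ℝ => √(max (t - δ) 0 / max t δ))
        (fun t : ℝ => √(max (t - δ) 0 / max t δ)) b hcg.continuousOn hcg.continuousOn]
    refine cfc_mono (fun t _ => ?_) (hcg.mul hcg).continuousOn (by fun_prop)
    rw [hsq, smul_eq_mul, mul_comm, ← div_eq_mul_inv]
    exact div_le_div_of_nonneg_left (le_max_right _ _) hδ (le_max_right _ _)
  refine ⟨s * g, ?_, ?_⟩
  · rw [hs, ← hgbg]
    simp [hg, mul_assoc]
  · have h1 : (s * g) * star (s * g) ≤ δ⁻¹ • cutoff a ε := by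
      have := star_right_conjugate_le_conjugate hgg s
      rw [hs]
      simpa [hg, mul_assoc] using this
    have h2 := CStarAlgebra.norm_le_norm_of_nonneg_of_le (mul_star_self_nonneg _) h1
    rw [norm_smul, CStarRing.norm_self_mul_star, ← sq, Real.norm_of_nonneg (by positivity)] at h2
    refine h2.trans ?_
    rw [mul_comm, ← div_eq_mul_inv]
    gcongr
    exact norm_cutoff_le ha hε.le
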